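/- arXiv:0902.4277 — 10 statements merged into one kernel-verified Lean document; each statement's English description precedes it below -/
import Mathlib

section
/- Let X be a quandle and let D(X) be the disjoint union X₁ ⊔ X₂ of two copies of X, writing x₁, x₂ for the two copies of x ∈ X. Define a binary operation on D(X) by xᵢ^{y₁} = (x^y)ᵢ and xᵢ^{y₂} = (x^{y⁻¹})ᵢ for i = 1, 2. Then D(X) with this operation is a quandle, and the involution ρ : D(X) → D(X) interchanging x₁ and x₂ for every x ∈ X is a good involution of D(X). -/
/-!
Every point of `D(X)` acts on `X` by a permutation: `y₁` by `x ↦ x^y` and `y₂` by its inverse.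
The action on `D(X)` applies this permutation inside each copy, so bijectivity and the properties
of the swap are immediate. Self-distributivity amounts to the operator of `b^a` being the
conjugate of the operator of `b` by that of `a` (`doubleOp_conj`). This holds because each operator
is an automorphism of `X`, and conjugation commutes with inversion.
-/

open Quandles

/-- A *good involution* of a rack/quandle `X`: an involution `ρ` such that
`ρ(x^y) = ρ(x)^y` and `x^{ρ(y)} = x^{y⁻¹}` for all `x, y`, where the paper's
`x^y` is `y ◃ x` and `x^{y⁻¹}` is `y ◃⁻¹ x`. -/
def IsGoodInvolution {X : Type*} [Rack X] (ρ : X → X) : Prop :=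
  (∀ x : X, ρ (ρ x) = x) ∧ (∀ x y : X, ρ (y ◃ x) = y ◃ ρ x) ∧
    (∀ x y : X, ρ y ◃ x = y ◃⁻¹ x)

/-- The permutation of `X` by which a point of the double `D(X)` acts on each copy of `X`. -/
def doubleOp {X : Type*} [Rack X] : X ⊕ X → Equiv.Perm X
  | Sum.inl y => Rack.act' y
  | Sum.inr y => (Rack.act' y)⁻¹

/-- Inverse translations are automorphisms too, so they also conjugate translations to
translations. -/
lemma act'_invAct_conj {X : Type*} [Rack X] (x y : X) :
    Rack.act' (x ◃⁻¹ y) = (Rack.act' x)⁻¹ * Rack.act' y * Rack.act' x := by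
  have h := Rack.ad_conj x (x ◃⁻¹ y)
  rw [Rack.act_invAct_eq] at h
  rw [h]
  group

lemma doubleOp_conj {X : Type*} [Rack X] (a b : X ⊕ X) :
    doubleOp (b.map (doubleOp a) (doubleOp a)) = doubleOp a * doubleOp b * (doubleOp a)⁻¹ := by
  rcases a with a | a <;> rcases b with b | b
  · exact Rack.ad_conj a b
  · change (Rack.act' (a ◃ b))⁻¹ = _
    rw [Rack.ad_conj]
    simp only [doubleOp]
    group
  · change Rack.act' (a ◃⁻¹ b) = _
    rw [act'_invAct_conj]
    simp only [doubleOp]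
    group
  · change (Rack.act' (a ◃⁻¹ b))⁻¹ = _
    rw [act'_invAct_conj]
    simp only [doubleOp]
    group

/-- The double of a quandle: `b` acts on `X ⊕ X` by applying `doubleOp b` in both summands. -/
@[reducible]
def doubleQuandle (X : Type*) [Quandle X] : Quandle (X ⊕ X) where
  act b a := a.map (doubleOp b) (doubleOp b)
  invAct b a := a.map (doubleOp b).symm (doubleOp b).symm
  left_inv b a := by cases a <;> simp
  right_inv b a := by cases a <;> simp
  self_distrib {a b c} := by
    rw [doubleOp_conj]
    cases c <;> simp
  fix {a} := by
    rcases a with x | x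
    · exact congrArg Sum.inl (Quandle.fix (x := x))
    · exact congrArg Sum.inr (Quandle.fix_inv (x := x))

/-- The double `D(X) = X₁ ⊔ X₂` of a quandle `X`, with operation
`xᵢ^{y₁} = (x^y)ᵢ` and `xᵢ^{y₂} = (x^{y⁻¹})ᵢ`, is a quandle, and the involution
interchanging the two copies (`Sum.swap`) is a good involution of it. -/
theorem double_quandle_swap_isGoodInvolution (X : Type*) [Quandle X] :
    ∃ q : Quandle (X ⊕ X),
      (∀ x y : X, q.act (Sum.inl y) (Sum.inl x) = Sum.inl (y ◃ x)) ∧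
      (∀ x y : X, q.act (Sum.inl y) (Sum.inr x) = Sum.inr (y ◃ x)) ∧
      (∀ x y : X, q.act (Sum.inr y) (Sum.inl x) = Sum.inl (y ◃⁻¹ x)) ∧
      (∀ x y : X, q.act (Sum.inr y) (Sum.inr x) = Sum.inr (y ◃⁻¹ x)) ∧
      (∀ a : X ⊕ X, Sum.swap (Sum.swap a) = a) ∧
      (∀ a b : X ⊕ X, Sum.swap (q.act b a) = q.act b (Sum.swap a)) ∧
      (∀ a b : X ⊕ X, q.act (Sum.swap b) a = q.invAct b a) := by
  refine ⟨doubleQuandle X, fun _ _ => rfl, fun _ _ => rfl, fun _ _ => rfl, fun _ _ => rfl,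
    Sum.swap_swap, ?_, ?_⟩
  · rintro (a | a) b <;> rfl
  · rintro (a | a) (b | b) <;> rfl
end

section
/- Let X be a quandle. If every involution of X (i.e. every map ρ : X → X with ρ ∘ ρ = id) is a good involution of X, then X is a trivial quandle, i.e. x^y = x for all x, y ∈ X. -/
open Quandles

/-- If every involution of a quandle `X` is a good involution, then `X` is a
trivial quandle, i.e. `x^y = x` (that is, `y ◃ x = x`) for all `x, y`. -/
theorem trivialQuandle_of_every_involution_good {X : Type*} [Quandle X]
    (h : ∀ ρ : X → X, (∀ x : X, ρ (ρ x) = x) → IsGoodInvolution ρ) :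
    ∀ x y : X, y ◃ x = x := by
  classical
  intro x y
  -- The transposition `ρ` of `x` and `y` is an involution, so
  -- `x = x ◃ x = ρ y ◃ x = y ◃⁻¹ x`.
  have key := (h (Equiv.swap x y) (Equiv.swap_apply_self x y)).2.2 x y
  rw [Equiv.swap_apply_right, Quandle.fix] at key
  calc y ◃ x = y ◃ (y ◃⁻¹ x) := by rw [← key]
    _ = x := Rack.right_inv y x
end

section
/- Let X be a quandle. Then X is a kei (i.e. (x^y)^y = x for all x, y ∈ X) if and only if X admits a good involution ρ which is a quandle homomorphism, i.e. which satisfies ρ(x^y) = ρ(x)^{ρ(y)} for all x, y ∈ X. -/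
open Quandles

/-- A quandle `X` is a kei iff it admits a good involution which is a quandle
homomorphism (i.e. `ρ(x^y) = ρ(x)^{ρ(y)}`, that is, `ρ (y ◃ x) = ρ y ◃ ρ x`). -/
theorem kei_iff_exists_goodInvolution_hom {X : Type*} [Quandle X] :
    (∀ x y : X, y ◃ (y ◃ x) = x) ↔
      ∃ ρ : X → X, IsGoodInvolution ρ ∧ ∀ x y : X, ρ (y ◃ x) = ρ y ◃ ρ x := by
  constructor
  · intro h
    refine ⟨id, ⟨fun _ => rfl, fun _ _ => rfl, fun x y => ?_⟩, fun _ _ => rfl⟩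
    -- a kei operation is its own inverse, so the identity is a good involution
    rw [id, ← Rack.left_cancel y, Rack.right_inv, h]
  · rintro ⟨ρ, ⟨hinv, hequiv, hneg⟩, hhom⟩ x y
    -- computing `ρ (y ◃ ρ x)` in two ways gives `y ◃ x = y ◃⁻¹ x`
    have key : y ◃ x = y ◃⁻¹ x := by
      rw [← hneg x y, ← hinv x, ← hequiv, hhom]
    rw [key, Rack.right_inv]
end

section
/- Let m be a positive even integer and let n = 2m. Define ρ₁ : ZMod n → ZMod n by ρ₁(i) = i if the representative of i in {0,1,…,n−1} is odd and ρ₁(i) = i + m if it is even, and define ρ₂ : ZMod n → ZMod n by ρ₂(i) = i + m if the representative of i is odd and ρ₂(i) = i if it is even. Then both half-antipodal maps ρ₁ and ρ₂ are good involutions of the dihedral quandle R_n. -/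
/-!
Both half-antipodal maps have the form `x ↦ x + c x`, where the shift `c x ∈ {0, m}` depends only
on the parity of `x`. Since `n = 2m` is even, parity is a ring homomorphism `ZMod n → ZMod 2`, so
it is unchanged by the reflections `x ↦ 2y - x`, and by adding `m` because `m` is even. Moreover
`2 * c x = 0`. These facts alone make `x ↦ x + c x` a good involution
(`isGoodInvolution_add_shift`): applying it twice adds `2 * c x = 0`, it commutes with reflections
because `-c x = c x`, and `2 (y + c y) - x = 2 y - x`, where each act is its own inverse.
-/

open Quandles

/-- A shift `x ↦ x + c x` by 2-torsion elements is a good involution of the dihedral quandle as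
soon as `c` is invariant under the shift itself and under all reflections `x ↦ 2y - x`. -/
theorem isGoodInvolution_add_shift {n : ℕ} {ρ : ZMod n → ZMod n} (c : ZMod n → ZMod n)
    (h_eq : ∀ x, ρ x = x + c x)
    (h_two : ∀ x, 2 * c x = 0) (h_shift : ∀ x, c (x + c x) = c x)
    (h_refl : ∀ x y, c (2 * y - x) = c x) :
    IsGoodInvolution (X := Quandle.Dihedral n) ρ := by
  obtain rfl : ρ = fun x => x + c x := funext h_eq
  refine ⟨fun (x : ZMod n) => ?_, fun (x y : ZMod n) => ?_, fun (x y : ZMod n) => ?_⟩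
  · change x + c x + c (x + c x) = x
    rw [h_shift]
    linear_combination h_two x
  · change 2 * y - x + c (2 * y - x) = 2 * y - (x + c x)
    rw [h_refl]
    linear_combination h_two x
  · change 2 * (y + c y) - x = 2 * y - x
    linear_combination h_two y

/-- The parity of the standard representative is the reduction homomorphism to `ZMod 2`. -/
theorem val_mod_two_eq_one_iff {m : ℕ} (hm : 0 < m) (i : ZMod (2 * m)) :
    i.val % 2 = 1 ↔ ZMod.castHom (Dvd.intro m rfl) (ZMod 2) i = 1 := by
  have : NeZero (2 * m) := ⟨by omega⟩
  rw [ZMod.castHom_apply, ← ZMod.natCast_val, ZMod.natCast_eq_one_iff_odd, Nat.odd_iff]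

/-- For `n = 2m` with `m` positive and even, the two half-antipodal maps
(fixing elements of odd (resp. even) standard representative and adding `m` to
the others) are good involutions of the dihedral quandle `R_n = ZMod n`. -/
theorem halfAntipodal_isGoodInvolution_dihedral (m : ℕ) (hm : 0 < m)
    (hme : Even m) :
    IsGoodInvolution (X := Quandle.Dihedral (2 * m))
      (fun i : ZMod (2 * m) =>
        if i.val % 2 = 1 then i else i + (m : ZMod (2 * m))) ∧
    IsGoodInvolution (X := Quandle.Dihedral (2 * m))
      (fun i : ZMod (2 * m) =>
        if i.val % 2 = 1 then i + (m : ZMod (2 * m)) else i) := by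
  have h_tors : (2 : ZMod (2 * m)) * (m : ZMod (2 * m)) = 0 := by
    exact_mod_cast ZMod.natCast_self (2 * m)
  have h_add : ∀ i : ZMod (2 * m), (i + (m : ZMod (2 * m))).val % 2 = 1 ↔ i.val % 2 = 1 := by
    intro i
    rw [val_mod_two_eq_one_iff hm, val_mod_two_eq_one_iff hm, map_add, map_natCast,
      ZMod.natCast_eq_zero_iff_even.mpr hme, add_zero]
  have h_refl : ∀ x y : ZMod (2 * m), (2 * y - x).val % 2 = 1 ↔ x.val % 2 = 1 := by
    intro x y
    rw [val_mod_two_eq_one_iff hm, val_mod_two_eq_one_iff hm, map_sub, map_mul, map_ofNat,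
      show (OfNat.ofNat 2 : ZMod 2) = 0 from rfl, zero_mul, zero_sub, ZMod.neg_eq_self_mod_two]
  constructor
  · refine isGoodInvolution_add_shift
      (fun i : ZMod (2 * m) => if i.val % 2 = 1 then 0 else (m : ZMod (2 * m)))
      (fun x => ?_) (fun x => ?_) (fun x => ?_) (fun x y => ?_)
    · by_cases h : x.val % 2 = 1 <;> simp [h]
    · by_cases h : x.val % 2 = 1 <;> simp [h, h_tors]
    · by_cases h : x.val % 2 = 1 <;> simp [h, h_add]
    · simp only [h_refl]
  · refine isGoodInvolution_add_shift
      (fun i : ZMod (2 * m) => if i.val % 2 = 1 then (m : ZMod (2 * m)) else 0)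
      (fun x => ?_) (fun x => ?_) (fun x => ?_) (fun x y => ?_)
    · by_cases h : x.val % 2 = 1 <;> simp [h]
    · by_cases h : x.val % 2 = 1 <;> simp [h, h_tors]
    · by_cases h : x.val % 2 = 1 <;> simp [h, h_add]
    · simp only [h_refl]
end

section
/- Let n be a positive integer and let ρ be a good involution of the dihedral quandle R_n = ZMod n. Then 2·ρ(i) = 2·i in ZMod n for every i ∈ ZMod n. Consequently, if n is odd then ρ(i) = i for every i. -/
open Quandles

/-- Any good involution `ρ` of the dihedral quandle `R_n = ZMod n` (`n > 0`)
satisfies `2 ρ(i) = 2 i` for all `i`; consequently if `n` is odd then `ρ` fixes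
every element. -/
theorem dihedral_goodInvolution_two_mul (n : ℕ) (hn : 0 < n)
    (ρ : ZMod n → ZMod n) (hρ : IsGoodInvolution (X := Quandle.Dihedral n) ρ) :
    (∀ i : ZMod n, 2 * ρ i = 2 * i) ∧ (Odd n → ∀ i : ZMod n, ρ i = i) := by
  have key : ∀ i : ZMod n, 2 * ρ i = 2 * i := by
    intro i
    -- The point `0` is moved to `2 * ρ i` by the symmetry at `ρ i`, and to `2 * i` by the inverse
    -- of the symmetry at `i`, which in `R_n` is that symmetry itself.
    have h : 2 * ρ i - 0 = 2 * i - 0 := hρ.2.2 (0 : ZMod n) i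
    simpa only [sub_zero] using h
  refine ⟨key, fun hodd i => ?_⟩
  have h2 : IsUnit (2 : ZMod n) := by
    have h := (ZMod.isUnit_iff_coprime 2 n).2 (Nat.coprime_two_left.2 hodd)
    exact_mod_cast h
  exact h2.mul_left_cancel (key i)
end

section
/- Let n = 2m be an even positive integer and let ρ be a good involution of the dihedral quandle R_n = ZMod n. If ρ(i) = i + m for some i ∈ ZMod n, then ρ(j) = j + m for every j ∈ ZMod n with i ≡ j (mod 2), i.e. for every j such that j − i lies in the subgroup of ZMod n generated by 2. -/
open Quandles

/-- Let `n = 2m` be even and `ρ` a good involution of the dihedral quandle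
`R_n = ZMod n`. If `ρ(i) = i + m` for some `i`, then `ρ(j) = j + m` for every
`j` with `i ≡ j (mod 2)`, i.e. with `j - i` in the subgroup generated by `2`. -/
theorem dihedral_goodInvolution_add_m_propagates (m : ℕ) (hm : 0 < m)
    (ρ : ZMod (2 * m) → ZMod (2 * m))
    (hρ : IsGoodInvolution (X := Quandle.Dihedral (2 * m)) ρ)
    (i : ZMod (2 * m)) (hi : ρ i = i + (m : ZMod (2 * m))) :
    ∀ j : ZMod (2 * m),
      j - i ∈ AddSubgroup.closure ({2} : Set (ZMod (2 * m))) →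
      ρ j = j + (m : ZMod (2 * m)) := by
  intro j hj
  obtain ⟨k, hk⟩ := AddSubgroup.mem_closure_singleton.1 hj
  rw [zsmul_eq_mul] at hk
  have hm2 : (2 : ZMod (2 * m)) * (m : ZMod (2 * m)) = 0 := by
    exact_mod_cast ZMod.natCast_self (2 * m)
  -- If `j - i = 2k`, the reflection in `i + k` carries `i` to `j`.
  have h : ρ (2 * (i + (k : ZMod (2 * m))) - i) = 2 * (i + (k : ZMod (2 * m))) - ρ i := hρ.2.1 i (i + (k : ZMod (2 * m)))
  have hj' : 2 * (i + (k : ZMod (2 * m))) - i = j := by linear_combination hk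
  rw [hj', hi] at h
  -- The reflection turns `+ m` into `- m`, which is the same since `2m = 0`.
  linear_combination h + hj' - hm2
end

section
/- Let n be an odd positive integer. Then the identity map is the only good involution of the dihedral quandle R_n = ZMod n; that is, every good involution ρ of R_n satisfies ρ = id. -/
open Quandles

/-- For `n` odd and positive, the identity is the only good involution of the
dihedral quandle `R_n = ZMod n`. -/
theorem dihedral_goodInvolution_odd_eq_id (n : ℕ) (hn : 0 < n) (hodd : Odd n)
    (ρ : ZMod n → ZMod n) (hρ : IsGoodInvolution (X := Quandle.Dihedral n) ρ) :
    ρ = id := by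
  have h2 : IsUnit (2 : ZMod n) := by
    have h := (ZMod.isUnit_iff_coprime 2 n).2 (Nat.coprime_two_left.2 hodd)
    exact_mod_cast h
  funext y
  -- Both actions of `y` are `x ↦ 2 * y - x`, so comparing them at `x = 0` gives `2 * ρ y = 2 * y`.
  have h : 2 * ρ y - 0 = 2 * y - 0 := hρ.2.2 (0 : ZMod n) y
  exact h2.mul_left_cancel (by simpa only [sub_zero, id_eq] using h)
end

section
/- Let n = 2m where m is an odd positive integer. Then every good involution ρ of the dihedral quandle R_n = ZMod n is either the identity map or the antipodal map i ↦ i + m. -/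
/-!
Write `d x = ρ x - x`. Since `R_n` is involutory, `ρ y ◃ x = y ◃⁻¹ x` gives `2 * d y = 0`, so
`d y ∈ {0, m}` (`ZMod.eq_zero_or_eq_of_two_mul_eq_zero`). Equivariance gives
`d (2 * y - x) = - d x = d x`, so `d` is invariant under translation by even elements. If
`d x = m` for some `x`, then `ρ (ρ x) = x` forces `d (x + m) = m`; as `m` is odd, `x` and `x + m`
represent both parities, so `d` is constantly `m`. Otherwise `d` vanishes identically.
-/

open Quandles

theorem ZMod.eq_zero_or_eq_of_two_mul_eq_zero {m : ℕ} (hm : 0 < m) {c : ZMod (2 * m)}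
    (hc : 2 * c = 0) : c = 0 ∨ c = m := by
  have : NeZero (2 * m) := ⟨by omega⟩
  have hlt := ZMod.val_lt c
  have hv : ((c.val : ℕ) : ZMod (2 * m)) = c := ZMod.natCast_zmod_val c
  have h : ((2 * c.val : ℕ) : ZMod (2 * m)) = 0 := by
    push_cast
    rw [hv, hc]
  rw [ZMod.natCast_eq_zero_iff] at h
  obtain ⟨k, hk⟩ := Nat.dvd_of_mul_dvd_mul_left two_pos h
  have hk2 : k < 2 := by
    by_contra! h2
    nlinarith
  rw [← hv, hk]
  interval_cases k <;> simp

/-- The axioms of a good involution of the dihedral quandle in ring operations; the last one is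
`ρ y ◃ x = y ◃⁻¹ x` at `x = 0`, which is equivalent to it for all `x`. -/
theorem IsGoodInvolution.dihedral_eqs {n : ℕ} {ρ : ZMod n → ZMod n}
    (hρ : IsGoodInvolution (X := Quandle.Dihedral n) ρ) :
    (∀ x, ρ (ρ x) = x) ∧ (∀ x y, ρ (2 * y - x) = 2 * y - ρ x) ∧ (∀ y, 2 * ρ y = 2 * y) := by
  obtain ⟨h1, h2, h3⟩ := hρ
  refine ⟨h1, h2, fun y => ?_⟩
  have h : 2 * ρ y - 0 = 2 * y - 0 := h3 (0 : ZMod n) y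
  simpa using h

/-- For `n = 2m` with `m` odd and positive, every good involution of the
dihedral quandle `R_n = ZMod n` is either the identity or the antipodal map. -/
theorem dihedral_goodInvolution_two_mul_odd (m : ℕ) (hm : 0 < m) (hmo : Odd m)
    (ρ : ZMod (2 * m) → ZMod (2 * m))
    (hρ : IsGoodInvolution (X := Quandle.Dihedral (2 * m)) ρ) :
    ρ = id ∨ ρ = fun i : ZMod (2 * m) => i + (m : ZMod (2 * m)) := by
  have : NeZero (2 * m) := ⟨by omega⟩
  obtain ⟨hinv, hact, htwo⟩ := hρ.dihedral_eqs
  have hd : ∀ x, ρ x = x ∨ ρ x = x + m := fun x => by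
    rcases ZMod.eq_zero_or_eq_of_two_mul_eq_zero hm (c := ρ x - x)
      (by rw [mul_sub, htwo, sub_self]) with h | h
    · exact Or.inl (sub_eq_zero.mp h)
    · exact Or.inr (by rw [← h]; ring)
  -- Translation by `2 * k` is the composite of the reflections in `0` and in `k`.
  have htrans : ∀ x k, ρ (x + 2 * k) = ρ x + 2 * k := fun x k => by
    have h0 := hact x 0
    have h1 := hact (2 * 0 - x) k
    rw [h0] at h1
    ring_nf at h1 ⊢
    exact h1
  have hmm : (m : ZMod (2 * m)) + m = 0 := by
    have := ZMod.natCast_self (2 * m)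
    push_cast at this
    linear_combination this
  by_cases hall : ∀ x, ρ x = x
  · exact Or.inl (funext hall)
  right
  push Not at hall
  obtain ⟨x, hx⟩ := hall
  have hxm : ρ x = x + m := (hd x).resolve_left hx
  have hxm' : ρ (x + m) = x := by rw [← hxm, hinv]
  obtain ⟨l, hl⟩ := hmo
  have hl' : (m : ZMod (2 * m)) = 2 * l + 1 := by
    have := congrArg (Nat.cast : ℕ → ZMod (2 * m)) hl
    push_cast at this
    exact this
  funext z
  have hv : (((z - x).val : ℕ) : ZMod (2 * m)) = z - x := ZMod.natCast_zmod_val _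
  rcases Nat.even_or_odd' (z - x).val with ⟨k, hk | hk⟩ <;> rw [hk] at hv <;> push_cast at hv
  · have hz : z = x + 2 * k := by linear_combination -hv
    rw [hz, htrans, hxm]
    ring
  · have hz : z = x + m + 2 * (k - l) := by linear_combination -hv - hl'
    rw [hz, htrans, hxm']
    linear_combination -hmm
end

section
/- Let n = 2m where m is a positive even integer. Then every good involution of the dihedral quandle R_n = ZMod n is one of exactly four maps: the identity map, the antipodal map i ↦ i + m, the half-antipodal map ρ₁ with ρ₁(i) = i for i with odd representative and ρ₁(i) = i + m for i with even representative, and the half-antipodal map ρ₂ with ρ₂(i) = i + m for i with odd representative and ρ₂(i) = i for i with even representative. -/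
/-! Write `ρ x = x + c x`. Acting by `ρ y` is the same as acting by `y`, so `2 * c y = 0`, and
`c` takes values in the 2-torsion `{0, m}` of `ZMod (2 * m)`. Compatibility with the operation
gives `ρ (2 * y - x) = 2 * y - ρ x`; taking `x = 0` and `x = 1`, and using `-m = m`, shows that
`c` is constant on even and on odd residues. The four maps are the four choices of `(c 0, c 1)`. -/

open Quandles

lemma eq_zero_or_eq_half {m : ℕ} (hm : 0 < m) (d : ZMod (2 * m)) (hd : 2 * d = 0) :
    d = 0 ∨ d = (m : ZMod (2 * m)) := by
  have : NeZero (2 * m) := ⟨by omega⟩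
  have hv : ((2 * d.val : ℕ) : ZMod (2 * m)) = 0 := by
    push_cast
    rw [ZMod.natCast_zmod_val, hd]
  rw [ZMod.natCast_eq_zero_iff] at hv
  obtain ⟨k, hk⟩ := Nat.dvd_of_mul_dvd_mul_left two_pos hv
  have hlt := d.val_lt
  have hk2 : k < 2 := by
    by_contra! h
    nlinarith
  rw [← ZMod.natCast_zmod_val d, hk]
  interval_cases k <;> simp

/-- For `n = 2m` with `m` even and positive, every good involution of the
dihedral quandle `R_n = ZMod n` is one of exactly four maps: the identity, the
antipodal map, and the two half-antipodal maps. -/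
theorem dihedral_goodInvolution_two_mul_even (m : ℕ) (hm : 0 < m) (hme : Even m)
    (ρ : ZMod (2 * m) → ZMod (2 * m))
    (hρ : IsGoodInvolution (X := Quandle.Dihedral (2 * m)) ρ) :
    ρ = id ∨
    ρ = (fun i : ZMod (2 * m) => i + (m : ZMod (2 * m))) ∨
    ρ = (fun i : ZMod (2 * m) =>
          if i.val % 2 = 1 then i else i + (m : ZMod (2 * m))) ∨
    ρ = (fun i : ZMod (2 * m) =>
          if i.val % 2 = 1 then i + (m : ZMod (2 * m)) else i) := by
  have : NeZero (2 * m) := ⟨by omega⟩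
  obtain ⟨-, hact, hinv⟩ := hρ
  -- The dihedral operations are definitionally `y ◃ x = y ◃⁻¹ x = 2 * y - x`.
  have hact' : ∀ x y : ZMod (2 * m), ρ (2 * y - x) = 2 * y - ρ x := hact
  have hinv' : ∀ x y : ZMod (2 * m), 2 * ρ y - x = 2 * y - x := hinv
  have hmm : (m : ZMod (2 * m)) + m = 0 := by
    have h := ZMod.natCast_self (2 * m)
    push_cast at h
    linear_combination h
  have hc : ∀ y, ρ y - y = 0 ∨ ρ y - y = (m : ZMod (2 * m)) := fun y =>
    eq_zero_or_eq_half hm _ (by linear_combination hinv' 0 y)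
  have heven : ∀ i : ZMod (2 * m), i.val % 2 ≠ 1 → ρ i = i - ρ 0 := by
    intro i hi
    have hval : i = 2 * ((i.val / 2 : ℕ) : ZMod (2 * m)) := by
      conv_lhs => rw [← ZMod.natCast_zmod_val i, show i.val = 2 * (i.val / 2) by omega]
      push_cast
      rfl
    have h := hact' 0 ((i.val / 2 : ℕ) : ZMod (2 * m))
    rwa [← hval, sub_zero] at h
  have hodd : ∀ i : ZMod (2 * m), i.val % 2 = 1 → ρ i = i + 1 - ρ 1 := by
    intro i hi
    have hval : i = 2 * ((i.val / 2 : ℕ) : ZMod (2 * m)) + 1 := by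
      conv_lhs => rw [← ZMod.natCast_zmod_val i, show i.val = 2 * (i.val / 2) + 1 by omega]
      push_cast
      rfl
    have h := hact' 1 (((i.val / 2 : ℕ) : ZMod (2 * m)) + 1)
    rw [show 2 * (((i.val / 2 : ℕ) : ZMod (2 * m)) + 1) - 1 = i by linear_combination -hval] at h
    linear_combination h - hval
  rcases hc 0 with h0 | h0 <;> rcases hc 1 with h1 | h1
  · left
    funext i
    by_cases hi : i.val % 2 = 1
    · simp only [id]
      linear_combination hodd i hi - h1
    · simp only [id]
      linear_combination heven i hi - h0
  · right; right; right
    funext i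
    by_cases hi : i.val % 2 = 1
    · simp only [hi, if_true]
      linear_combination hodd i hi - h1 - hmm
    · simp only [hi, if_false]
      linear_combination heven i hi - h0
  · right; right; left
    funext i
    by_cases hi : i.val % 2 = 1
    · simp only [hi, if_true]
      linear_combination hodd i hi - h1
    · simp only [hi, if_false]
      linear_combination heven i hi - h0 - hmm
  · right; left
    funext i
    by_cases hi : i.val % 2 = 1
    · linear_combination hodd i hi - h1 - hmm
    · linear_combination heven i hi - h0 - hmm
end

section
/- Let (X, ρ) be a symmetric quandle and let Y be a set with a right action (y, x) ↦ y^x of X such that: for each x ∈ X the map y ↦ y^x is a bijection; (y^{x₁})^{x₂} = (y^{x₂})^{(x₁^{x₂})} for all y ∈ Y and x₁, x₂ ∈ X; and (y^x)^{ρ(x)} = y for all y ∈ Y and x ∈ X. For n ≥ 1 let C_n(X)_Y be the free abelian group on the set Y × Xⁿ, and define the boundary homomorphism ∂_n : C_n(X)_Y → C_{n−1}(X)_Y on generators by ∂_n(y, x₁, …, x_n) = Σ_{i=1}^{n} (−1)^i [ (y, x₁, …, x̂ᵢ, …, x_n) − (y^{xᵢ}, x₁^{xᵢ}, …, x_{i−1}^{xᵢ},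 x̂ᵢ, x_{i+1}, …, x_n) ], where x̂ᵢ means that xᵢ is omitted. Let D_n^ρ(X)_Y be the subgroup of C_n(X)_Y generated by all elements (y, x₁, …, x_n) + (y^{xᵢ}, x₁^{xᵢ}, …, x_{i−1}^{xᵢ}, ρ(xᵢ), x_{i+1}, …, x_n) for 1 ≤ i ≤ n, y ∈ Y, x₁, …, x_n ∈ X. Then ∂_n(D_n^ρ(X)_Y) ⊆ D_{n−1}^ρ(X)_Y. -/
/-!
For `p = (y, x₁, …, xₙ)` let `T k p` be the second term of the `k`-th generator of `D^ρ`, so that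
`D^ρ` is generated by the elements `p + T k p`. Let `A i p` and `B i p` be the two terms of the
`i`-th face of `p` (omit `xᵢ`, respectively act by `xᵢ` and then omit it).

When `i ≠ k`, the operators `A i` and `B i` commute with `T`, up to renumbering `k` as the position
`k'` with `i.succAbove k' = k` after the omission (`face_twist`, `actFace_twist`); hence the `i`-th
face of `p + T k p` is a difference of two generators of `D^ρ`. When `i = k`, the relations
`A k (T k p) = B k p` and `B k (T k p) = A k p` (`face_twist_self`, `actFace_twist_self`) make the
`k`-th face vanish.
-/

open Quandles Finsupp

/-- The `n`-th chain group `C_n(X)_Y`: the free abelian group on `Y × Xⁿ`. -/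
abbrev SymQuandleChain (X Y : Type*) (n : ℕ) : Type _ :=
  (Y × (Fin n → X)) →₀ ℤ

/-- The boundary homomorphism `∂ : C_{n+1}(X)_Y → C_n(X)_Y`, defined on a
generator `(y, x₁, …, x_{n+1})` (indexed here by `i : Fin (n+1)`, corresponding
to the paper's index `i+1 ∈ {1, …, n+1}`) by
`∂(y, x₁, …, x_{n+1}) = Σᵢ (−1)^{i+1} [(y, x₁, …, x̂ᵢ, …, x_{n+1}) −
  (y^{xᵢ}, x₁^{xᵢ}, …, x_{i−1}^{xᵢ}, x̂ᵢ, x_{i+1}, …, x_{n+1})]`,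
where `actY : Y → X → Y` is the action of `X` on `Y` and `x^z = z ◃ x`. -/
noncomputable def symQuandleBoundary {X Y : Type*} [Quandle X]
    (actY : Y → X → Y) (n : ℕ) :
    SymQuandleChain X Y (n + 1) →+ SymQuandleChain X Y n :=
  Finsupp.liftAddHom fun p =>
    (zmultiplesHom _)
      (∑ i : Fin (n + 1),
        ((-1 : ℤ) ^ ((i : ℕ) + 1)) •
          (Finsupp.single (p.1, i.removeNth p.2) 1 -
            Finsupp.single
              (actY p.1 (p.2 i),
                fun j : Fin n =>
                  if (j : ℕ) < (i : ℕ) then p.2 i ◃ i.removeNth p.2 j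
                  else i.removeNth p.2 j) 1))

/-- The subgroup `D_n^ρ(X)_Y` of `C_n(X)_Y`, generated by the elements
`(y, x₁, …, x_n) + (y^{xᵢ}, x₁^{xᵢ}, …, x_{i−1}^{xᵢ}, ρ(xᵢ), x_{i+1}, …, x_n)`
for `1 ≤ i ≤ n`, `y ∈ Y` and `x₁, …, x_n ∈ X`. -/
noncomputable def symQuandleDrho {X Y : Type*} [Quandle X] (ρ : X → X) (actY : Y → X → Y)
    (n : ℕ) : AddSubgroup (SymQuandleChain X Y n) :=
  AddSubgroup.closure
    {c | ∃ (y : Y) (xs : Fin n → X) (i : Fin n),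
      c = Finsupp.single (y, xs) 1 +
          Finsupp.single
            (actY y (xs i),
              fun j : Fin n =>
                if (j : ℕ) < (i : ℕ) then xs i ◃ xs j
                else if j = i then ρ (xs i) else xs j) 1}

/-- The tuple `(y^{xᵢ}, x₁^{xᵢ}, …, x_{i−1}^{xᵢ}, ρ(xᵢ), x_{i+1}, …, x_n)`. -/
def twist {X Y : Type*} [Quandle X] (ρ : X → X) (actY : Y → X → Y) {n : ℕ} (i : Fin n)
    (p : Y × (Fin n → X)) : Y × (Fin n → X) :=
  (actY p.1 (p.2 i), fun j : Fin n =>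
    if (j : ℕ) < (i : ℕ) then p.2 i ◃ p.2 j else if j = i then ρ (p.2 i) else p.2 j)

/-- The face of a tuple that omits `xᵢ`. -/
def face {X Y : Type*} {n : ℕ} (i : Fin (n + 1)) (p : Y × (Fin (n + 1) → X)) :
    Y × (Fin n → X) :=
  (p.1, i.removeNth p.2)

/-- The face of a tuple that omits `xᵢ` after letting it act on `y` and on the entries before
it. -/
def actFace {X Y : Type*} [Quandle X] (actY : Y → X → Y) {n : ℕ} (i : Fin (n + 1))
    (p : Y × (Fin (n + 1) → X)) : Y × (Fin n → X) :=
  (actY p.1 (p.2 i), fun j : Fin n =>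
    if (j : ℕ) < (i : ℕ) then p.2 i ◃ i.removeNth p.2 j else i.removeNth p.2 j)

lemma succAbove_val {n : ℕ} (i : Fin (n + 1)) (j : Fin n) :
    (i.succAbove j : ℕ) = if (j : ℕ) < (i : ℕ) then (j : ℕ) else j + 1 := by
  simp only [Fin.succAbove, Fin.lt_def, Fin.val_castSucc]
  split_ifs <;> simp

section

variable {X Y : Type*} [Quandle X] (ρ : X → X) (actY : Y → X → Y) {n : ℕ}

lemma symQuandleBoundary_single (p : Y × (Fin (n + 1) → X)) :
    symQuandleBoundary actY n (Finsupp.single p 1) =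
      ∑ i : Fin (n + 1), ((-1 : ℤ) ^ ((i : ℕ) + 1)) •
        (Finsupp.single (face i p) 1 - Finsupp.single (actFace actY i p) 1) := by
  rw [symQuandleBoundary, Finsupp.liftAddHom_apply_single]
  simp only [zmultiplesHom_apply, one_zsmul]
  rfl

lemma add_twist_mem (i : Fin n) (p : Y × (Fin n → X)) :
    (Finsupp.single p 1 + Finsupp.single (twist ρ actY i p) 1 : SymQuandleChain X Y n) ∈
      symQuandleDrho ρ actY n :=
  AddSubgroup.subset_closure ⟨p.1, p.2, i, rfl⟩

lemma face_twist (i : Fin (n + 1)) (k : Fin n) (p : Y × (Fin (n + 1) → X)) :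
    face i (twist ρ actY (i.succAbove k) p) = twist ρ actY k (face i p) := by
  refine Prod.ext rfl (funext fun j => ?_)
  have h : ((i.succAbove j : ℕ) < (i.succAbove k : ℕ)) ↔ ((j : ℕ) < (k : ℕ)) := by
    rw [← Fin.lt_def, ← Fin.lt_def, Fin.succAbove_lt_succAbove_iff]
  simp only [face, twist, Fin.removeNth, h, Fin.succAbove_right_inj]

/-- The two orders of acting by `xᵢ` and by `x_k` agree by self-distributivity. -/
lemma actFace_twist (hρ2 : ∀ x y : X, ρ (y ◃ x) = y ◃ ρ x)
    (hdist : ∀ (y : Y) (x₁ x₂ : X),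
      actY (actY y x₁) x₂ = actY (actY y x₂) (x₂ ◃ x₁))
    (i : Fin (n + 1)) (k : Fin n) (p : Y × (Fin (n + 1) → X)) :
    actFace actY i (twist ρ actY (i.succAbove k) p) = twist ρ actY k (actFace actY i p) := by
  have hi : i ≠ i.succAbove k := (Fin.succAbove_ne i k).symm
  have hik : ((i : ℕ) < (i.succAbove k : ℕ)) ↔ ¬ ((k : ℕ) < (i : ℕ)) := by
    rw [succAbove_val]; split_ifs <;> omega
  refine Prod.ext ?_ (funext fun j => ?_)
  · by_cases hk : (k : ℕ) < (i : ℕ)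
    · simp only [actFace, twist, Fin.removeNth, hik, hk, hi, if_true, if_false, not_true]
      exact hdist _ _ _
    · simp only [actFace, twist, Fin.removeNth, hik, hk, if_true, if_false, not_false_eq_true]
      exact (hdist _ _ _).symm
  · have h : ((i.succAbove j : ℕ) < (i.succAbove k : ℕ)) ↔ ((j : ℕ) < (k : ℕ)) := by
      rw [← Fin.lt_def, ← Fin.lt_def, Fin.succAbove_lt_succAbove_iff]
    simp only [actFace, twist, Fin.removeNth, hik, h, Fin.succAbove_right_inj, hi, if_false]
    rcases lt_trichotomy (j : ℕ) (k : ℕ) with hjk | hjk | hjk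
    · by_cases hk : (k : ℕ) < (i : ℕ)
      · have hj : (j : ℕ) < (i : ℕ) := by omega
        simp only [hk, hj, hjk, if_true, if_false, not_true]
        exact Shelf.self_distrib
      · by_cases hj : (j : ℕ) < (i : ℕ)
        · simp only [hk, hj, hjk, if_true, if_false, not_false_eq_true]
          exact Shelf.self_distrib.symm
        · simp only [hk, hj, hjk, if_true, if_false]
    · obtain rfl : j = k := Fin.ext hjk
      by_cases hj : (j : ℕ) < (i : ℕ) <;> simp [hj, hρ2]
    · have hne : j ≠ k := fun e => by simp [e] at hjk
      have hlt : ¬ (j : ℕ) < (k : ℕ) := by omega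
      by_cases hj : (j : ℕ) < (i : ℕ)
      · have hk : (k : ℕ) < (i : ℕ) := by omega
        simp [hj, hk, hne, hlt]
      · simp [hj, hne, hlt]

lemma face_twist_self (k : Fin (n + 1)) (p : Y × (Fin (n + 1) → X)) :
    face k (twist ρ actY k p) = actFace actY k p := by
  refine Prod.ext rfl (funext fun j => ?_)
  have h : ((k.succAbove j : ℕ) < (k : ℕ)) ↔ ((j : ℕ) < (k : ℕ)) := by
    rw [succAbove_val]; split_ifs <;> omega
  simp only [face, twist, actFace, Fin.removeNth, h, Fin.succAbove_ne, if_false]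

/-- Acting by `ρ(x_k)` undoes the action of `x_k`. -/
lemma actFace_twist_self (hρ3 : ∀ x y : X, ρ y ◃ x = y ◃⁻¹ x)
    (hinv : ∀ (y : Y) (x : X), actY (actY y x) (ρ x) = y)
    (k : Fin (n + 1)) (p : Y × (Fin (n + 1) → X)) :
    actFace actY k (twist ρ actY k p) = face k p := by
  refine Prod.ext ?_ (funext fun j => ?_)
  · simp [actFace, twist, face, hinv]
  · have h : ((k.succAbove j : ℕ) < (k : ℕ)) ↔ ((j : ℕ) < (k : ℕ)) := by
      rw [succAbove_val]; split_ifs <;> omega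
    simp only [face, twist, actFace, Fin.removeNth, h, Fin.succAbove_ne, if_false, lt_irrefl,
      if_true, hρ3]
    by_cases hj : (j : ℕ) < (k : ℕ) <;> simp [hj]

end

/-- For a symmetric quandle `(X, ρ)` and an `(X, ρ)`-set `Y`, the boundary map
sends `D_{n+1}^ρ(X)_Y` into `D_n^ρ(X)_Y`; hence `D_*^ρ(X)_Y` is a subcomplex of
`C_*(X)_Y`. -/
theorem symQuandleBoundary_mem_Drho {X Y : Type*} [Quandle X] (ρ : X → X)
    (hρ1 : ∀ x : X, ρ (ρ x) = x)
    (hρ2 : ∀ x y : X, ρ (y ◃ x) = y ◃ ρ x)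
    (hρ3 : ∀ x y : X, ρ y ◃ x = y ◃⁻¹ x)
    (actY : Y → X → Y)
    (hbij : ∀ x : X, Function.Bijective fun y : Y => actY y x)
    (hdist : ∀ (y : Y) (x₁ x₂ : X),
      actY (actY y x₁) x₂ = actY (actY y x₂) (x₂ ◃ x₁))
    (hinv : ∀ (y : Y) (x : X), actY (actY y x) (ρ x) = y)
    (n : ℕ) :
    ∀ c ∈ symQuandleDrho ρ actY (n + 1),
      symQuandleBoundary actY n c ∈ symQuandleDrho ρ actY n := by
  intro c hc
  suffices h : symQuandleDrho ρ actY (n + 1) ≤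
      (symQuandleDrho ρ actY n).comap (symQuandleBoundary actY n) from h hc
  refine (AddSubgroup.closure_le _).2 ?_
  rintro _ ⟨y, xs, k, rfl⟩
  change symQuandleBoundary actY n
    (Finsupp.single (y, xs) 1 + Finsupp.single (twist ρ actY k (y, xs)) 1) ∈
      symQuandleDrho ρ actY n
  generalize (y, xs) = p
  rw [map_add, symQuandleBoundary_single, symQuandleBoundary_single, ← Finset.sum_add_distrib]
  refine AddSubgroup.sum_mem _ fun i _ => ?_
  rw [← smul_add]
  refine AddSubgroup.zsmul_mem _ ?_ _
  rw [sub_add_sub_comm]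
  by_cases hik : k = i
  · subst hik
    rw [face_twist_self, actFace_twist_self ρ actY hρ3 hinv, add_comm, sub_self]
    exact AddSubgroup.zero_mem _
  · obtain ⟨k', rfl⟩ := Fin.exists_succAbove_eq hik
    rw [face_twist, actFace_twist ρ actY hρ2 hdist]
    exact AddSubgroup.sub_mem _ (add_twist_mem ρ actY k' _) (add_twist_mem ρ actY k' _)
end
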